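/- Let E_n^sep denote expectation with respect to the uniform probability measure on SEP(n). Then E_n^sep[A_n^{+,−}] − (2−√2)n → −(1/4)(3−2√2) as n→∞, and the same limit holds for E_n^sep[A_n^{−,+}]. -/

import Mathlib

open Finset Filter Real
open scoped Classical

/-- `σ` contains the pattern `τ` (a permutation of `Fin k` given as a function). -/
def ContainsPattern {n k : ℕ} (σ : Equiv.Perm (Fin n)) (τ : Fin k → Fin k) : Prop :=
  ∃ f : Fin k → Fin n, StrictMono f ∧ ∀ a b : Fin k, τ a < τ b ↔ σ (f a) < σ (f b)

/-- A permutation is separable iff it avoids the patterns 2413 and 3142. -/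
def Separable {n : ℕ} (σ : Equiv.Perm (Fin n)) : Prop :=
  ¬ ContainsPattern σ (![1, 3, 0, 2] : Fin 4 → Fin 4) ∧
  ¬ ContainsPattern σ (![2, 0, 3, 1] : Fin 4 → Fin 4)

/-- The set of separable permutations of `[n]`. -/
noncomputable def SEP (n : ℕ) : Finset (Equiv.Perm (Fin n)) :=
  Finset.univ.filter fun σ => Separable σ

/-- `IsAltSeq σ s l` : `l` is a strictly increasing list of indices along which the values of `σ`
alternate, starting with an ascent if `s = true` and starting with a descent if `s = false`. -/
def IsAltSeq {n : ℕ} (σ : Equiv.Perm (Fin n)) (s : Bool) (l : List (Fin n)) : Prop :=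
  l.Chain' (· < ·) ∧
  ∀ j : ℕ, ∀ hj : j + 1 < l.length,
    if decide (j % 2 = 0) = s then
      σ (l.get ⟨j, Nat.lt_of_succ_lt hj⟩) < σ (l.get ⟨j + 1, hj⟩)
    else
      σ (l.get ⟨j + 1, hj⟩) < σ (l.get ⟨j, Nat.lt_of_succ_lt hj⟩)

/-- The length of the longest alternating subsequence of `σ` of type `(s, e)`, where
`true` stands for ascent and `false` for descent.  An alternating subsequence starting with
an ascent ends with a descent iff its length is odd (and similarly in the other cases), so the
type is encoded by the parity constraint; a singleton counts as a subsequence of types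
`(+,-)` and `(-,+)` but not of types `(+,+)` and `(-,-)`. -/
noncomputable def altTypeLen {n : ℕ} (σ : Equiv.Perm (Fin n)) (s e : Bool) : ℕ :=
  sSup {k | ∃ l : List (Fin n), IsAltSeq σ s l ∧ l.length = k ∧
    k % 2 = (if s = e then 0 else 1)}

/-- The length `Aₙ(σ)` of the longest alternating subsequence of `σ`. -/
noncomputable def altLen {n : ℕ} (σ : Equiv.Perm (Fin n)) : ℕ :=
  sSup {k | ∃ l : List (Fin n), (IsAltSeq σ true l ∨ IsAltSeq σ false l) ∧
    l.length = k ∧ 1 ≤ k}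

/-- Expectation with respect to the uniform probability measure on `SEP n`. -/
noncomputable def sepExp (n : ℕ) (f : Equiv.Perm (Fin n) → ℝ) : ℝ :=
  (∑ σ ∈ SEP n, f σ) / (SEP n).card

/-- Variance with respect to the uniform probability measure on `SEP n`. -/
noncomputable def sepVar (n : ℕ) (f : Equiv.Perm (Fin n) → ℝ) : ℝ :=
  sepExp n (fun σ => (f σ - sepExp n f) ^ 2)

/-- `B₁^{+,n}(σ)`: the length of the first indecomposable block (0-indexed positions). -/
noncomputable def Bplus {n : ℕ} (σ : Equiv.Perm (Fin n)) : ℕ :=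
  sInf {j | 1 ≤ j ∧ ∀ i : Fin n, (i : ℕ) < j → (σ i : ℕ) < j}

/-- `B₁^{-,n}(σ)`: the length of the first skew indecomposable block (0-indexed positions). -/
noncomputable def Bminus {n : ℕ} (σ : Equiv.Perm (Fin n)) : ℕ :=
  sInf {j | 1 ≤ j ∧ ∀ i : Fin n, (i : ℕ) < j → n - j ≤ (σ i : ℕ)}

/-- Expectation over indecomposable separable permutations of `[n]`, i.e. the conditional
expectation under the uniform measure on `SEP n` given `{B₁^{+,n} = n}`. -/
noncomputable def indecExp (n : ℕ) (f : Equiv.Perm (Fin n) → ℝ) : ℝ :=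
  (∑ σ ∈ (SEP n).filter (fun σ => Bplus σ = n), f σ) /
    ((SEP n).filter (fun σ => Bplus σ = n)).card

/-! ### Alternating sublists and peaks -/

/-- `Zigzag r l`: consecutive entries of `l` are related alternately by `r` and its converse,
starting with `r`. -/
def Zigzag : (ℕ → ℕ → Prop) → List ℕ → Prop
  | _, [] => True
  | _, [_] => True
  | r, a :: b :: t => r a b ∧ Zigzag (fun x y => r y x) (b :: t)

/-- The number of interior entries of a list lying strictly `r`-above both neighbours. -/
noncomputable def peaks (r : ℕ → ℕ → Prop) : List ℕ → ℕ
  | a :: b :: c :: t => (if r a b ∧ r c b then 1 else 0) + peaks r (b :: c :: t)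
  | _ => 0

theorem exists_zigzag_sublist (r : ℕ → ℕ → Prop) [IsStrictTotalOrder ℕ r] :
    ∀ (h : ℕ) (l : List ℕ), ∃ x t, List.Sublist (x :: t) (h :: l) ∧ Zigzag r (x :: t) ∧
      (x :: t).length = 2 * peaks r (h :: l) + 1 ∧ ¬ r h x
  | h, [] => ⟨h, [], List.Sublist.refl _, trivial, by simp [peaks], irrefl h⟩
  | a, [b] => ⟨a, [], by simp, trivial, by simp [peaks], irrefl a⟩
  | a, b :: c :: l => by
    by_cases hp : r a b ∧ r c b
    · obtain ⟨x, t, hs, hz, hl, hx⟩ := exists_zigzag_sublist r c l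
      have hxb : r x b := by
        rcases trichotomous_of r c x with h | h | h
        · exact absurd h hx
        · exact h ▸ hp.2
        · exact _root_.trans h hp.2
      refine ⟨a, b :: x :: t, (hs.cons_cons b).cons_cons a, ⟨hp.1, hxb, hz⟩, ?_, irrefl a⟩
      have h1 : peaks r (b :: c :: l) = peaks r (c :: l) := by
        match l with
        | [] => simp [peaks]
        | d :: l => simp [peaks, asymm hp.2]
      simp only [List.length_cons] at hl ⊢
      rw [peaks, if_pos hp, h1]
      omega
    · obtain ⟨x, t, hs, hz, hl, hx⟩ := exists_zigzag_sublist r b (c :: l)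
      have h1 : peaks r (a :: b :: c :: l) = peaks r (b :: c :: l) := by
        rw [peaks, if_neg hp, zero_add]
      rw [h1]
      by_cases hax : r a x
      · match t with
        | [] => exact ⟨a, [], by simp, trivial, by simpa using hl, irrefl a⟩
        | y :: t =>
          refine ⟨a, y :: t, ?_, ⟨_root_.trans hax hz.1, hz.2⟩, by simpa using hl, irrefl a⟩
          exact ((List.sublist_cons_self x _).trans hs).cons_cons a
      · exact ⟨x, t, hs.cons a, hz, hl, hax⟩

theorem le_peaks_of_zigzag (r : ℕ → ℕ → Prop) [IsStrictTotalOrder ℕ r] :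
    ∀ (l : List ℕ), l.Nodup → ∀ (l' : List ℕ) (k : ℕ), List.Sublist l' l → Zigzag r l' →
      l'.length = 2 * k + 1 → k ≤ peaks r l
  | [], _, l', k, hs, _, hl => by
    have := hs.length_le
    simp only [List.length_nil] at this; omega
  | [a], _, l', k, hs, _, hl => by
    have := hs.length_le
    simp only [List.length_cons, List.length_nil] at this; omega
  | [a, b], _, l', k, hs, _, hl => by
    have := hs.length_le
    simp only [List.length_cons, List.length_nil] at this; omega
  | a :: b :: c :: l, hnd, l', k, hs, hz, hl => by
    have ih := le_peaks_of_zigzag r (b :: c :: l) (List.nodup_cons.1 hnd).2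
    have hle : peaks r (b :: c :: l) ≤ peaks r (a :: b :: c :: l) := by
      rw [peaks]; omega
    rcases List.sublist_cons_iff.1 hs with h | ⟨m, rfl, hm⟩
    · exact (ih l' k h hz hl).trans hle
    match m with
    | [] => simp only [List.length_cons, List.length_nil] at hl; omega
    | [y] => simp only [List.length_cons, List.length_nil] at hl; omega
    | y :: z :: w =>
    have hay : r a y := hz.1
    have hzy : r z y := hz.2.1
    have hzw : Zigzag r (z :: w) := hz.2.2
    have hk : (z :: w).length = 2 * (k - 1) + 1 ∧ 1 ≤ k := by
      simp only [List.length_cons] at hl ⊢; omega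
    have hzs : List.Sublist (z :: w) (b :: c :: l) := (List.sublist_cons_self y _).trans hm
    by_cases hby : r b y
    · -- replace `a` by `b`
      rcases List.sublist_cons_iff.1 hm with h | ⟨m', h1, hm'⟩
      · exact (ih (b :: y :: z :: w) k (h.cons_cons b) ⟨hby, hzy, hzw⟩ hl).trans hle
      · obtain ⟨rfl, -⟩ := List.cons.inj h1
        exact absurd hby (irrefl _)
    · have hyb : y = b ∨ r y b := by
        rcases trichotomous_of r b y with h | h | h
        · exact absurd h hby
        · exact Or.inl h.symm
        · exact Or.inr h
      have hab : r a b := by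
        rcases hyb with rfl | h
        · exact hay
        · exact _root_.trans hay h
      have hzb : r z b := by
        rcases hyb with rfl | h
        · exact hzy
        · exact _root_.trans hzy h
      by_cases hcb : r c b
      · have := ih (z :: w) (k - 1) hzs hzw hk.1
        rw [peaks, if_pos ⟨hab, hcb⟩]; omega
      · have hbc : r b c := by
          rcases trichotomous_of r b c with h | h | h
          · exact h
          · subst h
            simp at hnd
          · exact absurd h hcb
        have hzl : List.Sublist (z :: w) l := by
          have h1 : List.Sublist (z :: w) (c :: l) := by
            rcases List.sublist_cons_iff.1 hm with h | ⟨m', h1, hm'⟩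
            · exact (List.sublist_cons_self y _).trans h
            · rw [← (List.cons.inj h1).2] at hm'
              exact hm'
          rcases List.sublist_cons_iff.1 h1 with h | ⟨m', h1, hm'⟩
          · exact h
          · obtain ⟨rfl, -⟩ := List.cons.inj h1
            exact absurd hbc (asymm hzb)
        exact (ih (b :: c :: z :: w) k ((hzl.cons_cons c).cons_cons b)
          ⟨hbc, _root_.trans hzb hbc, hzw⟩ hl).trans hle

/-- The word of values of a permutation. -/
def word {n : ℕ} (σ : Equiv.Perm (Fin n)) : List ℕ :=
  (List.finRange n).map fun i => (σ i : ℕ)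

theorem word_nodup {n : ℕ} (σ : Equiv.Perm (Fin n)) : (word σ).Nodup :=
  (List.nodup_finRange n).map (Fin.val_injective.comp σ.injective)

theorem length_word {n : ℕ} (σ : Equiv.Perm (Fin n)) : (word σ).length = n := by
  simp [word]

theorem sublist_finRange_iff {n : ℕ} (l : List (Fin n)) :
    List.Sublist l (List.finRange n) ↔ l.IsChain (· < ·) := by
  rw [List.isChain_iff_pairwise]
  constructor
  · intro h
    exact (List.pairwise_lt_finRange n).sublist h
  · intro h
    exact List.sublist_of_subperm_of_pairwise
      (List.subperm_of_subset h.nodup (fun x _ => List.mem_finRange x)) h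
      (List.pairwise_lt_finRange n)

theorem sublist_word_iff {n : ℕ} (σ : Equiv.Perm (Fin n)) (w : List ℕ) :
    List.Sublist w (word σ) ↔
      ∃ l : List (Fin n), l.IsChain (· < ·) ∧ w = l.map fun i => (σ i : ℕ) := by
  simp only [word, List.sublist_map_iff, sublist_finRange_iff]

/-- The strict order `<` or `>` according to a sign. -/
def signedLT (s : Bool) : ℕ → ℕ → Prop := if s then (· < ·) else (· > ·)

instance (s : Bool) : IsStrictTotalOrder ℕ (signedLT s) := by
  cases s
  · exact inferInstanceAs (IsStrictTotalOrder ℕ (· > ·))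
  · exact inferInstanceAs (IsStrictTotalOrder ℕ (· < ·))

theorem zigzag_map_iff {n : ℕ} (σ : Equiv.Perm (Fin n)) (s : Bool) (l : List (Fin n)) :
    Zigzag (signedLT s) (l.map fun i => (σ i : ℕ)) ↔
      ∀ j : ℕ, ∀ hj : j + 1 < l.length,
        if decide (j % 2 = 0) = s then
          σ (l.get ⟨j, Nat.lt_of_succ_lt hj⟩) < σ (l.get ⟨j + 1, hj⟩)
        else
          σ (l.get ⟨j + 1, hj⟩) < σ (l.get ⟨j, Nat.lt_of_succ_lt hj⟩) := by
  induction l generalizing s with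
  | nil => simp [Zigzag]
  | cons a l ih =>
    match l with
    | [] => simp [Zigzag]
    | b :: t =>
      have hsw : (fun x y => signedLT s y x) = signedLT (!s) := by
        cases s <;> rfl
      simp only [List.map_cons] at ih ⊢
      rw [Zigzag, hsw, ih]
      constructor
      · rintro ⟨h0, h⟩ j hj
        match j with
        | 0 => cases s <;> simpa [signedLT] using h0
        | j + 1 =>
          have := h j (by simpa using hj)
          have hpar : decide ((j + 1) % 2 = 0) = !decide (j % 2 = 0) := by
            rcases Nat.mod_two_eq_zero_or_one j with h | h <;> simp [Nat.add_mod, h]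
          rw [hpar]
          cases s <;> simpa using this
      · intro h
        refine ⟨?_, fun j hj => ?_⟩
        · have := h 0 (by simp)
          cases s <;> simpa [signedLT] using this
        · have := h (j + 1) (by simpa using hj)
          have hpar : decide ((j + 1) % 2 = 0) = !decide (j % 2 = 0) := by
            rcases Nat.mod_two_eq_zero_or_one j with h | h <;> simp [Nat.add_mod, h]
          rw [hpar] at this
          cases s <;> simpa using this

theorem altTypeLen_not_eq {n : ℕ} (hn : n ≠ 0) (σ : Equiv.Perm (Fin n)) (s : Bool) :
    altTypeLen σ s (!s) = 1 + 2 * peaks (signedLT s) (word σ) := by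
  apply IsGreatest.csSup_eq
  constructor
  · obtain ⟨h, l, hw⟩ : ∃ h l, word σ = h :: l :=
      List.exists_cons_of_ne_nil fun h => hn (by rw [← length_word σ, h]; rfl)
    obtain ⟨x, t, hs, hz, hl, -⟩ := exists_zigzag_sublist (signedLT s) h l
    rw [← hw] at hs hl
    obtain ⟨m, hm, he⟩ := (sublist_word_iff σ _).1 hs
    rw [he] at hz hl
    refine ⟨m, ⟨hm, (zigzag_map_iff σ s m).1 hz⟩, ?_, ?_⟩
    · simpa [add_comm] using hl
    · cases s <;> simp [Nat.add_mod]
  · rintro k ⟨l, ⟨hc, hz⟩, rfl, hk⟩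
    have hk' : l.length % 2 = 1 := by cases s <;> simpa using hk
    have := le_peaks_of_zigzag (signedLT s) (word σ) (word_nodup σ) _ (l.length / 2)
      ((sublist_word_iff σ _).2 ⟨l, hc, rfl⟩) ((zigzag_map_iff σ s l).2 hz)
      (by rw [List.length_map]; omega)
    omega

/-! ### Asymptotics of the central Delannoy recurrence -/

theorem tendsto_zero_of_le_mul_add {e b : ℕ → ℝ} {q : ℝ} (hq0 : 0 ≤ q) (hq : q < 1)
    (hb : Tendsto b atTop (nhds 0)) (h : ∀ᶠ n in atTop, |e (n + 1)| ≤ q * |e n| + b n) :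
    Tendsto e atTop (nhds 0) := by
  rw [Metric.tendsto_atTop]
  intro ε hε
  have h1 : ∀ᶠ n in atTop, b n < (1 - q) * (ε / 2) :=
    hb.eventually_lt_const (by have : 0 < 1 - q := by linarith
                               positivity)
  obtain ⟨N, hN⟩ := eventually_atTop.1 (h.and h1)
  have h2 : ∀ k, |e (N + k)| ≤ q ^ k * |e N| + ε / 2 := by
    intro k
    induction k with
    | zero => simp; positivity
    | succ k ih =>
      obtain ⟨h3, h4⟩ := hN (N + k) (by omega)
      have := mul_le_mul_of_nonneg_left ih hq0
      rw [← add_assoc, pow_succ]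
      nlinarith
  have h5 : Tendsto (fun k : ℕ => q ^ k * |e N|) atTop (nhds 0) := by
    simpa using (tendsto_pow_atTop_nhds_zero_of_lt_one hq0 hq).mul_const |e N|
  obtain ⟨K, hK⟩ := eventually_atTop.1 (h5.eventually_lt_const (half_pos hε))
  refine ⟨N + K, fun n hn => ?_⟩
  obtain ⟨k, rfl⟩ := Nat.exists_eq_add_of_le (show N ≤ n by omega)
  rw [Real.dist_eq, sub_zero]
  have := h2 k
  have := hK k (by omega)
  linarith

/-- Central Delannoy numbers grow at least by a factor of three. -/
theorem three_mul_le_of_recurrence {d : ℕ → ℝ} (h0 : d 0 = 1) (h1 : d 1 = 3)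
    (hd : ∀ n : ℕ, (n + 2) * d (n + 2) = (6 * n + 9) * d (n + 1) - (n + 1) * d n) (n : ℕ) :
    0 < d n ∧ 3 * d n ≤ d (n + 1) := by
  induction n with
  | zero => simp [h0, h1]
  | succ n ih =>
    have hp : 0 < d (n + 1) := by linarith [ih.1, ih.2]
    refine ⟨hp, ?_⟩
    have hn : (0 : ℝ) ≤ n := n.cast_nonneg
    have h2 := hd n
    have h3 : (0 : ℝ) ≤ (n + 1) * (d (n + 1) - 3 * d n) :=
      mul_nonneg (by positivity) (by linarith [ih.2])
    have h4 : (0 : ℝ) ≤ n * d (n + 1) := by positivity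
    have h5 : (n + 2 : ℝ) * (3 * d (n + 1)) ≤ (n + 2) * d (n + 2) := by
      rw [h2]
      nlinarith [ih.1]
    exact le_of_mul_le_mul_left h5 (by positivity)

theorem tendsto_mul_ratio_sub {d : ℕ → ℝ} (h0 : d 0 = 1) (h1 : d 1 = 3)
    (hd : ∀ n : ℕ, (n + 2) * d (n + 2) = (6 * n + 9) * d (n + 1) - (n + 1) * d n)
    {α : ℝ} (hα : 3 ≤ α) (hα' : α ^ 2 = 6 * α - 1) :
    Tendsto (fun n => d (n + 1) / d n) atTop (nhds α) ∧
    Tendsto (fun n : ℕ => (n + 2) * (d (n + 1) / d n - α)) atTop (nhds (-α / 2)) := by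
  have hpos := three_mul_le_of_recurrence h0 h1 hd
  set r : ℕ → ℝ := fun n => d (n + 1) / d n with hr
  have hr3 : ∀ n, 3 ≤ r n := fun n => (le_div_iff₀ (hpos n).1).2 (hpos n).2
  have hrec : ∀ n : ℕ, r (n + 1) - α =
      (r n - α) / (α * r n) + (-3 + 1 / r n) / (n + 2) := by
    intro n
    have hn : (0 : ℝ) ≤ n := n.cast_nonneg
    have hd0 := (hpos n).1.ne'
    have hd1 := (hpos (n + 1)).1.ne'
    have hd2 : d (n + 2) = ((6 * n + 9) * d (n + 1) - (n + 1) * d n) / (n + 2) := by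
      rw [← hd n]; field_simp
    have h6 : α = 6 - 1 / α := by
      field_simp
      linarith
    have h7 : (r n - α) / (α * r n) = 1 / α - 1 / r n := by
      have := hr3 n
      field_simp
    rw [h7]
    have h8 : 1 / α = 6 - α := by linarith
    rw [h8]
    simp only [hr, hd2]
    field_simp
    ring
  have hN : Tendsto (fun n : ℕ => (3 : ℝ) / (n + 2)) atTop (nhds 0) := by
    have := (tendsto_const_div_atTop_nhds_zero_nat (3 : ℝ)).comp (tendsto_add_atTop_nat 2)
    refine this.congr fun n => ?_
    simp
  have hinv : ∀ n, |-3 + 1 / r n| ≤ 3 := by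
    intro n
    have h3 := hr3 n
    have h4 : 0 < 1 / r n := by positivity
    have h5 : 1 / r n ≤ 1 := by
      rw [div_le_one (by linarith)]; linarith
    rw [abs_le]; constructor <;> linarith
  have hcoef : ∀ n, 1 / (α * r n) ≤ 1 / 9 := by
    intro n
    have := hr3 n
    apply one_div_le_one_div_of_le (by norm_num)
    nlinarith
  have he : Tendsto (fun n => r n - α) atTop (nhds 0) := by
    refine tendsto_zero_of_le_mul_add (q := 1 / 9) (by norm_num) (by norm_num) hN
      (Eventually.of_forall fun n => ?_)
    have h3 := hr3 n
    rw [hrec]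
    refine (abs_add_le _ _).trans (add_le_add ?_ ?_)
    · rw [abs_div, abs_of_pos (show 0 < α * r n by positivity), div_eq_mul_one_div, mul_comm]
      exact mul_le_mul_of_nonneg_right (hcoef n) (abs_nonneg _)
    · rw [abs_div, abs_of_pos (show (0 : ℝ) < n + 2 by positivity)]
      exact div_le_div_of_nonneg_right (hinv n) (by positivity)
  have hlim : Tendsto r atTop (nhds α) := by simpa using he.add_const α
  refine ⟨hlim, ?_⟩
  have hα0 : α ≠ 0 := by linarith
  set w : ℕ → ℝ := fun n => (n + 2) * (r n - α) with hw
  set a : ℕ → ℝ := fun n => (1 + 1 / (n + 2)) * (1 / (α * r n)) with ha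
  set c : ℕ → ℝ := fun n => (1 + 1 / (n + 2)) * (-3 + 1 / r n) with hc
  have hwrec : ∀ n, w (n + 1) = a n * w n + c n := by
    intro n
    have h3 := hr3 n
    have hn : (0 : ℝ) ≤ n := n.cast_nonneg
    simp only [hw, ha, hc]
    rw [hrec]
    push_cast
    field_simp
    ring
  have hM : Tendsto (fun n : ℕ => 1 + (1 : ℝ) / (n + 2)) atTop (nhds 1) := by
    have := (hN.mul_const (1 / 3)).const_add 1
    simp only [zero_mul, add_zero] at this
    refine this.congr fun n => ?_
    ring
  have halim : Tendsto a atTop (nhds (1 / (α * α))) := by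
    have := hM.mul ((hlim.const_mul α).inv₀ (mul_ne_zero hα0 hα0))
    simpa [ha] using this
  have hclim : Tendsto c atTop (nhds (-3 + 1 / α)) := by
    have := hM.mul ((hlim.inv₀ hα0).const_add (-3))
    simpa [hc] using this
  have hb : Tendsto (fun n => |a n * (-α / 2) + c n - (-α / 2)|) atTop (nhds 0) := by
    have := (((halim.mul_const (-α / 2)).add hclim).sub_const (-α / 2)).abs
    have h0 : 1 / (α * α) * (-α / 2) + (-3 + 1 / α) - (-α / 2) = 0 := by
      field_simp
      linarith
    rwa [h0, abs_zero] at this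
  have hz : Tendsto (fun n => w n - (-α / 2)) atTop (nhds 0) := by
    refine tendsto_zero_of_le_mul_add (q := 2 / 9) (by norm_num) (by norm_num) hb
      (Eventually.of_forall fun n => ?_)
    have h3 := hr3 n
    have hn : (0 : ℝ) ≤ n := n.cast_nonneg
    have h4 : w (n + 1) - (-α / 2) =
        a n * (w n - (-α / 2)) + (a n * (-α / 2) + c n - (-α / 2)) := by
      rw [hwrec]; ring
    rw [h4]
    refine (abs_add_le _ _).trans (add_le_add ?_ le_rfl)
    rw [abs_mul]
    refine mul_le_mul_of_nonneg_right ?_ (abs_nonneg _)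
    have h5 : (1 : ℝ) / (n + 2) ≤ 1 := by
      rw [div_le_one (by positivity)]; linarith
    have h6 : (0 : ℝ) < 1 / (n + 2) := by positivity
    have h7 : 0 < 1 / (α * r n) := by positivity
    have h8 := hcoef n
    rw [abs_of_pos (by simp only [ha]; positivity)]
    simp only [ha]
    nlinarith
  simpa using hz.add_const (-α / 2)

/-! ### Extracting coefficients -/

open PowerSeries in
/-- If `S` is the Schröder series and `P` is related to it as the peak generating function,
then coefficients of both are expressed by the central Delannoy numbers. -/
theorem exists_delannoy (S P : PowerSeries ℝ) (hS0 : PowerSeries.constantCoeff S = 0)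
    (hS : S ^ 2 = S - X - X * S) (hP : 2 * (P * (1 - X - 2 * S)) = S ^ 2 - X ^ 2) :
    ∃ d : ℕ → ℝ, d 0 = 1 ∧ d 1 = 3 ∧
      (∀ n : ℕ, (n + 2) * d (n + 2) = (6 * n + 9) * d (n + 1) - (n + 1) * d n) ∧
      (∀ n : ℕ, 2 * coeff (n + 2) S = - d (n + 2) + 6 * d (n + 1) - d n) ∧
      (∀ n : ℕ, 4 * coeff (n + 2) P = d (n + 2) - 4 * d (n + 1) - d n) := by
  set R : PowerSeries ℝ := 1 - X - 2 * S with hR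
  have hR2 : R * R = 1 - 6 * X + X ^ 2 := by
    rw [hR]; linear_combination 4 * hS
  have hRc : PowerSeries.constantCoeff R = 1 := by simp [hR, hS0]
  set D : PowerSeries ℝ := R⁻¹ with hD
  have hDR : D * R = 1 := PowerSeries.inv_mul_cancel _ (by rw [hRc]; exact one_ne_zero)
  have hRD : R = (1 - 6 * X + X ^ 2) * D := by
    rw [← hR2]; linear_combination -R * hDR
  have hPD : 4 * P = (1 - 4 * X - X ^ 2) * D - (1 - X) := by
    have h1 : 2 * P = (S ^ 2 - X ^ 2) * D := by
      linear_combination D * hP - 2 * P * hDR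
    have h2 : 2 * (S ^ 2 - X ^ 2) = (1 - 4 * X - X ^ 2) - (1 - X) * R := by
      rw [hR]; linear_combination 2 * hS
    linear_combination 2 * h1 + D * h2 - (1 - X) * hDR
  have hSD : 2 * S = 1 - X - (1 - 6 * X + X ^ 2) * D := by
    rw [← hRD, hR]; ring
  have hder : (1 - 6 * X + X ^ 2) * d⁄dX ℝ D = (3 - X) * D := by
    have e1 : d⁄dX ℝ (R * R) = -6 + 2 * X := by
      rw [hR2]
      simp only [map_add, map_sub, Derivation.leibniz, Derivation.leibniz_pow]
      have h6 : d⁄dX ℝ (6 : PowerSeries ℝ) = 0 := by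
        have := (d⁄dX ℝ).map_natCast 6
        simpa using this
      simp [h6]
    have h20 : (2 : PowerSeries ℝ) ≠ 0 := fun h => by
      have := congrArg PowerSeries.constantCoeff h
      rw [map_ofNat, map_zero] at this
      exact two_ne_zero this
    have e2 : d⁄dX ℝ (D * R) = 0 := by rw [hDR]; simp
    rw [Derivation.leibniz] at e1 e2
    simp only [smul_eq_mul] at e1 e2
    have e1' : 2 * (R * d⁄dX ℝ R) = 2 * (X - 3) := by linear_combination e1
    have e1'' : R * d⁄dX ℝ R = X - 3 := mul_left_cancel₀ h20 e1'
    rw [← hR2]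
    linear_combination R * e2 - D * e1''
  have c0 : coeff 0 D = 1 := by
    have := congrArg PowerSeries.constantCoeff hDR
    simpa [hRc] using this
  have h3 : (3 : PowerSeries ℝ) = C 3 := (map_ofNat C 3).symm
  have h2 : (2 : PowerSeries ℝ) = C 2 := (map_ofNat C 2).symm
  have h4 : (4 : PowerSeries ℝ) = C 4 := (map_ofNat C 4).symm
  have h6 : (6 : PowerSeries ℝ) = C 6 := (map_ofNat C 6).symm
  refine ⟨fun n => coeff n D, c0, ?_, fun n => ?_, fun n => ?_, fun n => ?_⟩
  · have := congrArg (coeff 0) hder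
    rw [h3, h6] at this
    simp only [sub_mul, add_mul, pow_two, mul_assoc, one_mul, map_sub, map_add,
      PowerSeries.coeff_C_mul, PowerSeries.coeff_zero_X_mul, PowerSeries.coeff_derivative,
      c0] at this
    norm_num at this
    exact this
  · have := congrArg (coeff (n + 1)) hder
    rw [h3, h6] at this
    simp only [sub_mul, add_mul, pow_two, mul_assoc, one_mul, map_sub, map_add,
      PowerSeries.coeff_C_mul, PowerSeries.coeff_succ_X_mul, PowerSeries.coeff_derivative] at this
    cases n with
    | zero =>
      simp only [PowerSeries.coeff_zero_X_mul] at this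
      norm_num at this ⊢
      linarith
    | succ n =>
      simp only [PowerSeries.coeff_succ_X_mul, PowerSeries.coeff_derivative] at this
      push_cast at this ⊢
      linarith
  · have := congrArg (coeff (n + 2)) hSD
    rw [h2, h6] at this
    simp only [sub_mul, add_mul, pow_two, mul_assoc, one_mul, map_sub, map_add,
      PowerSeries.coeff_C_mul, PowerSeries.coeff_succ_X_mul] at this
    simp [PowerSeries.coeff_one, PowerSeries.coeff_X] at this
    linarith
  · have := congrArg (coeff (n + 2)) hPD
    rw [h4] at this
    simp only [sub_mul, pow_two, mul_assoc, one_mul, map_sub,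
      PowerSeries.coeff_C_mul, PowerSeries.coeff_succ_X_mul] at this
    simp [PowerSeries.coeff_one, PowerSeries.coeff_X] at this
    linarith

theorem tendsto_mean_of_coeff (S P : PowerSeries ℝ) (hS0 : PowerSeries.constantCoeff S = 0)
    (hS : S ^ 2 = S - PowerSeries.X - PowerSeries.X * S)
    (hP : 2 * (P * (1 - PowerSeries.X - 2 * S)) = S ^ 2 - PowerSeries.X ^ 2) :
    Tendsto (fun n : ℕ => 1 + 2 * (PowerSeries.coeff n P / PowerSeries.coeff n S)
      - (2 - Real.sqrt 2) * n) atTop (nhds (-(1 / 4) * (3 - 2 * Real.sqrt 2))) := by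
  obtain ⟨d, h0, h1, hd, hdS, hdP⟩ := exists_delannoy S P hS0 hS hP
  have hpos := three_mul_le_of_recurrence h0 h1 hd
  have h2 : Real.sqrt 2 ^ 2 = 2 := Real.sq_sqrt (by norm_num)
  have h2' : 0 < Real.sqrt 2 := by positivity
  obtain ⟨hlim, hlim2⟩ := tendsto_mul_ratio_sub h0 h1 hd
    (α := 3 + 2 * Real.sqrt 2) (by linarith) (by linear_combination 4 * h2)
  rw [← tendsto_add_atTop_iff_nat 2]
  have hden : Tendsto (fun n => (3 * (d (n + 1) / d n) - 1) *
      (3 * (3 + 2 * Real.sqrt 2) - 1)) atTop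
      (nhds ((3 * (3 + 2 * Real.sqrt 2) - 1) * (3 * (3 + 2 * Real.sqrt 2) - 1))) :=
    ((hlim.const_mul 3).sub_const 1).mul_const _
  have hne : (3 * (3 + 2 * Real.sqrt 2) - 1) ≠ 0 := by linarith
  have := (hlim2.const_mul 4).div hden (mul_ne_zero hne hne)
  have hval : 4 * (-(3 + 2 * Real.sqrt 2) / 2) /
      ((3 * (3 + 2 * Real.sqrt 2) - 1) * (3 * (3 + 2 * Real.sqrt 2) - 1)) =
      -(1 / 4) * (3 - 2 * Real.sqrt 2) := by
    rw [div_eq_iff (mul_ne_zero hne hne)]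
    linear_combination (-21 - 18 * Real.sqrt 2) * h2
  rw [hval] at this
  refine this.congr fun n => ?_
  have hdn := (hpos n).1
  have hd3 := (hpos n).2
  have hn : (0 : ℝ) ≤ n := n.cast_nonneg
  have hn2 : (n + 2 : ℝ) ≠ 0 := by positivity
  have hd2 : d (n + 2) = ((6 * n + 9) * d (n + 1) - (n + 1) * d n) / (n + 2) := by
    rw [← hd n]; field_simp
  have hcS : PowerSeries.coeff (n + 2) S = (3 * d (n + 1) - d n) / (2 * (n + 2)) := by
    have := hdS n
    rw [hd2] at this
    rw [eq_div_iff (by positivity)]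
    field_simp at this
    linarith
  have hcP : PowerSeries.coeff (n + 2) P =
      ((2 * n + 1) * d (n + 1) - (2 * n + 3) * d n) / (4 * (n + 2)) := by
    have := hdP n
    rw [hd2] at this
    rw [eq_div_iff (by positivity)]
    field_simp at this
    linarith
  obtain ⟨x, hx⟩ : ∃ x, x = 3 * d (n + 1) - d n := ⟨_, rfl⟩
  have hX : x ≠ 0 := by linarith
  have hA : 1 + 2 * (PowerSeries.coeff (n + 2) P / PowerSeries.coeff (n + 2) S) =
      2 * (n + 2) * (d (n + 1) - d n) / x := by
    rw [hcS, hcP, ← hx]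
    field_simp
    rw [hx]
    ring
  have hB : 3 * (d (n + 1) / d n) - 1 = x / d n := by
    rw [hx]
    field_simp
  have hC : (2 - Real.sqrt 2) =
      2 * ((3 + 2 * Real.sqrt 2) - 1) / (3 * (3 + 2 * Real.sqrt 2) - 1) := by
    rw [eq_div_iff hne]
    linear_combination (-6) * h2
  push_cast
  simp only [Pi.div_apply]
  rw [hA, hB, hC]
  generalize 3 + 2 * Real.sqrt 2 = α at *
  obtain ⟨y, hy⟩ : ∃ y, y = 3 * α - 1 := ⟨_, rfl⟩
  rw [← hy] at hne ⊢
  field_simp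
  rw [hx, hy]
  ring

/-! ### Separable words and their decomposition -/

/-- No sublist of length four forms the pattern `3142` with respect to `r`
(for `r` the converse of `<`, this is the pattern `2413`). -/
def Avoids (r : ℕ → ℕ → Prop) (l : List ℕ) : Prop :=
  ∀ a b c d, List.Sublist [a, b, c, d] l → ¬ (r b d ∧ r d a ∧ r a c)

/-- `l` splits into two nonempty parts, every entry of the first being `r`-below every entry of
the second. -/
def Splits (r : ℕ → ℕ → Prop) (l : List ℕ) : Prop :=
  ∃ u v, u ≠ [] ∧ v ≠ [] ∧ l = u ++ v ∧ ∀ x ∈ u, ∀ y ∈ v, r x y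

theorem Avoids.sublist {r : ℕ → ℕ → Prop} {l l' : List ℕ} (h : Avoids r l)
    (hs : List.Sublist l' l) : Avoids r l' :=
  fun a b c d h' => h a b c d (h'.trans hs)

theorem Avoids.map {r r' : ℕ → ℕ → Prop} {l : List ℕ} (h : Avoids r l) (f : ℕ → ℕ)
    (hf : ∀ x ∈ l, ∀ y ∈ l, r' (f x) (f y) → r x y) : Avoids r' (l.map f) := by
  intro a b c d hs
  obtain ⟨m, hm, he⟩ := List.sublist_map_iff.1 hs
  match m with
  | [] | [_] | [_, _] | [_, _, _] | _ :: _ :: _ :: _ :: _ :: _ => simp at he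
  | [a', b', c', d'] =>
    simp only [List.map_cons, List.map_nil, List.cons.injEq, and_true] at he
    obtain ⟨rfl, rfl, rfl, rfl⟩ := he
    have ha := hm.subset (show a' ∈ [a', b', c', d'] by simp)
    have hb := hm.subset (show b' ∈ [a', b', c', d'] by simp)
    have hc := hm.subset (show c' ∈ [a', b', c', d'] by simp)
    have hd := hm.subset (show d' ∈ [a', b', c', d'] by simp)
    rintro ⟨h1, h2, h3⟩
    exact h _ _ _ _ hm ⟨hf _ hb _ hd h1, hf _ hd _ ha h2, hf _ ha _ hc h3⟩

theorem Splits.map {r r' : ℕ → ℕ → Prop} {l : List ℕ} (h : Splits r l) (f : ℕ → ℕ)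
    (hf : ∀ x ∈ l, ∀ y ∈ l, r x y → r' (f x) (f y)) : Splits r' (l.map f) := by
  obtain ⟨u, v, hu, hv, rfl, huv⟩ := h
  refine ⟨u.map f, v.map f, by simpa, by simpa, by simp, ?_⟩
  intro x hx y hy
  obtain ⟨x, hx', rfl⟩ := List.mem_map.1 hx
  obtain ⟨y, hy', rfl⟩ := List.mem_map.1 hy
  exact hf x (by simp [hx']) y (by simp [hy']) (huv x hx' y hy')

theorem exists_append_of_pivot (r : ℕ → ℕ → Prop) (x : ℕ) (u : List ℕ)
    (h : ∀ a ∈ u, r a x ∨ r x a) :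
    ∃ A B, u = A ++ B ∧ (∀ a ∈ A, r a x) ∧ ∀ p w, B = p :: w → r x p := by
  induction u with
  | nil => exact ⟨[], [], by simp⟩
  | cons a u ih =>
    rcases h a (by simp) with ha | ha
    · obtain ⟨A, B, rfl, hA, hB⟩ := ih fun b hb => h b (by simp [hb])
      exact ⟨a :: A, B, rfl, by simpa [ha] using hA, hB⟩
    · refine ⟨[], a :: u, rfl, by simp, fun p w h => ?_⟩
      rwa [← (List.cons.inj h).1]

theorem Splits.append_singleton (r : ℕ → ℕ → Prop) [IsStrictTotalOrder ℕ r] {l : List ℕ}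
    {x : ℕ} (hl : Splits r l) (hx : x ∉ l) (hav : Avoids r (l ++ [x])) :
    Splits r (l ++ [x]) ∨ Splits (fun x y => r y x) (l ++ [x]) := by
  obtain ⟨u, v, hu, hv, rfl, huv⟩ := hl
  have htot : ∀ a ∈ u, r a x ∨ r x a := by
    intro a ha
    rcases trichotomous_of r a x with h | h | h
    · exact Or.inl h
    · subst h; simp [ha] at hx
    · exact Or.inr h
  obtain ⟨y, v', rfl⟩ := List.exists_cons_of_ne_nil hv
  obtain ⟨A, B, rfl, hA, hB⟩ := exists_append_of_pivot r x u htot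
  have hBall : ∀ b ∈ B, (∃ s ∈ B, r s x) → False := by
    rintro b hb ⟨s, hs, hsx⟩
    obtain ⟨p, w, rfl⟩ := List.exists_cons_of_ne_nil (List.ne_nil_of_mem hb)
    have hp := hB p w rfl
    have hsw : s ∈ w := by
      rcases List.mem_cons.1 hs with rfl | h
      · exact absurd hsx (asymm hp)
      · exact h
    refine hav p s y x ?_ ⟨hsx, hp, huv p (by simp) y (by simp)⟩
    have h1 : List.Sublist [p, s] (A ++ p :: w) :=
      ((List.singleton_sublist.2 hsw).cons_cons p).trans (List.sublist_append_right _ _)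
    have h2 : List.Sublist [y] (y :: v') := by simp
    exact (h1.append h2).append (List.Sublist.refl [x])
  have hBx : ∀ b ∈ B, r x b := fun b hb =>
    (htot b (by simp [hb])).resolve_left fun h => hBall b hb ⟨b, hb, h⟩
  by_cases hA0 : A = []
  · right
    subst hA0
    refine ⟨B ++ y :: v', [x], by simp, by simp, by simp, ?_⟩
    intro a ha z hz
    obtain rfl := List.mem_singleton.1 hz
    rcases List.mem_append.1 ha with h | h
    · exact hBx a h
    · obtain ⟨b, hb⟩ := List.exists_mem_of_ne_nil B (by simpa using hu)
      exact _root_.trans (hBx b hb) (huv b (by simp [hb]) a h)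
  · left
    refine ⟨A, B ++ y :: v' ++ [x], hA0, by simp, by simp, ?_⟩
    intro a ha z hz
    simp only [List.mem_append, List.mem_singleton] at hz
    rcases hz with (hz | hz) | rfl
    · exact _root_.trans (hA a ha) (hBx z hz)
    · exact huv a (by simp [ha]) z hz
    · exact hA a ha

theorem splits_or_splits {l : List ℕ} (hnd : l.Nodup) (hlen : 2 ≤ l.length)
    (h1 : Avoids (· < ·) l) (h2 : Avoids (· > ·) l) :
    Splits (· < ·) l ∨ Splits (· > ·) l := by
  induction l using List.reverseRecOn with
  | nil => simp at hlen
  | append_singleton l x ih =>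
    have hx : x ∉ l := fun h => by
      rw [List.nodup_append] at hnd
      exact hnd.2.2 x h x (by simp) rfl
    have hs : List.Sublist l (l ++ [x]) := List.sublist_append_left _ _
    by_cases hl : 2 ≤ l.length
    · rcases ih (hnd.sublist hs) hl (h1.sublist hs) (h2.sublist hs) with h | h
      · exact h.append_singleton _ hx h1
      · exact (h.append_singleton _ hx h2).symm
    · match l with
      | [] => simp at hlen
      | _ :: _ :: _ => simp at hl
      | [a] =>
        rcases lt_or_gt_of_ne (show a ≠ x by simpa [eq_comm] using hx) with h | h
        · exact Or.inl ⟨[a], [x], by simp, by simp, rfl, by simpa using h⟩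
        · exact Or.inr ⟨[a], [x], by simp, by simp, rfl, by simpa using h⟩

theorem Splits.head_last {r : ℕ → ℕ → Prop} {l : List ℕ} (h : Splits r l) (hl : l ≠ []) :
    r (l.head hl) (l.getLast hl) := by
  obtain ⟨u, v, hu, hv, rfl, huv⟩ := h
  rw [List.head_append_of_ne_nil hu, List.getLast_append_of_ne_nil _ hv]
  exact huv _ (List.head_mem hu) _ (List.getLast_mem hv)

theorem Splits.ne_nil {r : ℕ → ℕ → Prop} {l : List ℕ} (h : Splits r l) : l ≠ [] := by
  obtain ⟨u, v, hu, hv, rfl, huv⟩ := h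
  simp [hu]

theorem Splits.not_swap {l : List ℕ} (h : Splits (· > ·) l) : ¬ Splits (· < ·) l :=
  fun h' => lt_asymm (h.head_last h.ne_nil) (h'.head_last h.ne_nil)

/-- The words of the nonempty separable permutations. -/
noncomputable def sepWords (n : ℕ) : Finset (List ℕ) :=
  (List.range n).permutations.toFinset.filter
    fun l => l ≠ [] ∧ Avoids (· < ·) l ∧ Avoids (· > ·) l

/-- Separable words that are direct sums. -/
noncomputable def sumWords (n : ℕ) : Finset (List ℕ) := (sepWords n).filter (Splits (· < ·))

/-- Separable words that are skew sums. -/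
noncomputable def skewWords (n : ℕ) : Finset (List ℕ) := (sepWords n).filter (Splits (· > ·))

/-- Separable words that are not direct sums. -/
noncomputable def indecWords (n : ℕ) : Finset (List ℕ) :=
  (sepWords n).filter fun l => ¬ Splits (· < ·) l

theorem mem_sepWords {n : ℕ} {l : List ℕ} : l ∈ sepWords n ↔
    List.Perm l (List.range n) ∧ l ≠ [] ∧ Avoids (· < ·) l ∧ Avoids (· > ·) l := by
  simp [sepWords]

theorem lt_of_mem_sepWords {n : ℕ} {l : List ℕ} (hl : l ∈ sepWords n) {x : ℕ} (hx : x ∈ l) :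
    x < n :=
  List.mem_range.1 ((mem_sepWords.1 hl).1.subset hx)

theorem length_of_mem_sepWords {n : ℕ} {l : List ℕ} (hl : l ∈ sepWords n) : l.length = n := by
  simpa using (mem_sepWords.1 hl).1.length_eq

theorem perm_range_of_split {n : ℕ} {u v : List ℕ} (h : List.Perm (u ++ v) (List.range n))
    (huv : ∀ x ∈ u, ∀ y ∈ v, x < y) :
    List.Perm u (List.range u.length) ∧
      ∃ w, v = w.map (u.length + ·) ∧ List.Perm w (List.range (n - u.length)) := by
  have hnd : (u ++ v).Nodup := h.nodup_iff.2 List.nodup_range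
  have hund : u.Nodup := hnd.sublist (List.sublist_append_left _ _)
  have hsub : u ⊆ List.range u.length := by
    intro x hx
    have h1 : List.range (x + 1) ⊆ u := by
      intro y hy
      have hy' : y ≤ x := by simpa [Nat.lt_succ_iff] using hy
      have hxn : x < n := List.mem_range.1 (h.subset (by simp [hx]))
      have : y ∈ u ++ v := h.symm.subset (List.mem_range.2 (by omega))
      rcases List.mem_append.1 this with h | h
      · exact h
      · exact absurd (huv x hx y h) (by omega)
    have := (List.subperm_of_subset List.nodup_range h1).length_le
    rw [List.length_range] at this
    exact List.mem_range.2 this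
  have hu : List.Perm u (List.range u.length) :=
    (List.subperm_of_subset hund hsub).perm_of_length_le (by simp)
  refine ⟨hu, ?_⟩
  have hlen : u.length ≤ n := by
    have := h.length_eq
    simp at this; omega
  obtain ⟨k, rfl⟩ := Nat.exists_eq_add_of_le hlen
  rw [List.range_add] at h
  have hv : List.Perm v ((List.range k).map (u.length + ·)) :=
    (List.perm_append_left_iff u).1 (h.trans (hu.symm.append_right _))
  refine ⟨v.map (· - u.length), ?_, ?_⟩
  · rw [List.map_map]
    conv_lhs => rw [← List.map_id v]
    refine List.map_congr_left fun y hy => ?_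
    obtain ⟨i, -, rfl⟩ := List.mem_map.1 (hv.subset hy)
    simp
  · have := hv.map (· - u.length)
    rw [List.map_map] at this
    simpa [Function.comp_def] using this

theorem avoids_append {r : ℕ → ℕ → Prop} {u v : List ℕ} (hu : Avoids r u) (hv : Avoids r v)
    (huv : ∀ x ∈ u, ∀ y ∈ v, (x < y)) (hr : r = (· < ·) ∨ r = (· > ·)) :
    Avoids r (u ++ v) := by
  intro a b c d hs
  obtain ⟨l₁, l₂, he, h1, h2⟩ := List.sublist_append_iff.1 hs
  match l₁ with
  | [] =>
    rw [List.nil_append] at he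
    exact hv a b c d (he ▸ h2)
  | [a'] =>
    simp only [List.cons_append, List.nil_append, List.cons.injEq] at he
    obtain ⟨rfl, rfl⟩ := he
    have hab := huv a (h1.subset (by simp)) b (h2.subset (by simp))
    have hac := huv a (h1.subset (by simp)) c (h2.subset (by simp))
    have had := huv a (h1.subset (by simp)) d (h2.subset (by simp))
    rcases hr with rfl | rfl <;> grind
  | [a', b'] =>
    simp only [List.cons_append, List.nil_append, List.cons.injEq] at he
    obtain ⟨rfl, rfl, rfl⟩ := he
    have hac := huv a (h1.subset (by simp)) c (h2.subset (by simp))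
    have had := huv a (h1.subset (by simp)) d (h2.subset (by simp))
    rcases hr with rfl | rfl <;> grind
  | [a', b', c'] =>
    simp only [List.cons_append, List.nil_append, List.cons.injEq] at he
    obtain ⟨rfl, rfl, rfl, rfl⟩ := he
    have had := huv a (h1.subset (by simp)) d (h2.subset (by simp))
    have hbd := huv b (h1.subset (by simp)) d (h2.subset (by simp))
    have hcd := huv c (h1.subset (by simp)) d (h2.subset (by simp))
    rcases hr with rfl | rfl <;> grind
  | a' :: b' :: c' :: d' :: t =>
    simp only [List.cons_append, List.cons.injEq] at he
    obtain ⟨rfl, rfl, rfl, rfl, ht⟩ := he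
    have : t = [] := (List.append_eq_nil_iff.1 ht.symm).1
    subst this
    exact hu a b c d h1

/-- The direct sum of words, the first one being of length `n`. -/
def dsum (n : ℕ) (u v : List ℕ) : List ℕ := u ++ v.map (n + ·)

theorem lt_of_mem_dsum {j : ℕ} {u : List ℕ} (hu : u ∈ sepWords j) (v : List ℕ) :
    ∀ x ∈ u, ∀ y ∈ v.map (j + ·), x < y := by
  intro x hx y hy
  obtain ⟨z, -, rfl⟩ := List.mem_map.1 hy
  have := lt_of_mem_sepWords hu hx
  omega

theorem dsum_mem_sumWords {j k : ℕ} {u v : List ℕ} (hu : u ∈ sepWords j)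
    (hv : v ∈ sepWords k) : dsum j u v ∈ sumWords (j + k) := by
  have hlt := lt_of_mem_dsum hu v
  obtain ⟨hup, hu0, hu1, hu2⟩ := mem_sepWords.1 hu
  obtain ⟨hvp, hv0, hv1, hv2⟩ := mem_sepWords.1 hv
  refine Finset.mem_filter.2 ⟨mem_sepWords.2 ⟨?_, by simp [dsum, hu0], ?_, ?_⟩, ?_⟩
  · rw [List.range_add]
    exact hup.append (hvp.map _)
  · exact avoids_append hu1 (hv1.map _ (by simp)) hlt (Or.inl rfl)
  · exact avoids_append hu2 (hv2.map _ (by simp)) hlt (Or.inr rfl)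
  · exact ⟨u, v.map (j + ·), hu0, by simpa, rfl, hlt⟩

theorem length_le_of_dsum_eq {j j' : ℕ} {u u' v v' : List ℕ} (hu : u ∈ sepWords j)
    (hu' : u' ∈ indecWords j') (h : dsum j u v = dsum j' u' v') : j' ≤ j := by
  by_contra! hlt
  rw [indecWords, Finset.mem_filter] at hu'
  have h1 : u.length ≤ u'.length := by
    rw [length_of_mem_sepWords hu, length_of_mem_sepWords hu'.1]; omega
  obtain ⟨w, rfl⟩ := List.prefix_of_prefix_length_le
    (show u <+: dsum j u v from List.prefix_append _ _)
    (show u' <+: dsum j u v from h ▸ List.prefix_append _ _) h1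
  rw [dsum, dsum, List.append_assoc, List.append_cancel_left_eq] at h
  refine hu'.2 ⟨u, w, (mem_sepWords.1 hu).2.1, ?_, rfl, ?_⟩
  · rintro rfl
    rw [List.append_nil] at hu'
    have := length_of_mem_sepWords hu'.1
    have := length_of_mem_sepWords hu
    omega
  · intro x hx y hy
    exact lt_of_mem_dsum hu v x hx y (by rw [h]; simp [hy])

theorem exists_dsum_eq {n : ℕ} {l : List ℕ} (hl : l ∈ sumWords n) :
    ∃ j k, j + k = n ∧ ∃ u ∈ indecWords j, ∃ v ∈ sepWords k, dsum j u v = l := by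
  obtain ⟨hl, hs⟩ := Finset.mem_filter.1 hl
  obtain ⟨hp, -, h1, h2⟩ := mem_sepWords.1 hl
  have hex : ∃ j, ∃ u v, u.length = j ∧ u ≠ [] ∧ v ≠ [] ∧ l = u ++ v ∧
      ∀ x ∈ u, ∀ y ∈ v, x < y := by
    obtain ⟨u, v, h⟩ := hs
    exact ⟨_, u, v, rfl, h⟩
  obtain ⟨u, v, hj, hu0, hv0, rfl, huv⟩ := Nat.find_spec hex
  have hmin := fun m => Nat.find_min hex (m := m)
  rw [← hj] at hmin
  obtain ⟨hup, w, rfl, hw⟩ := perm_range_of_split hp huv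
  have hlen : u.length ≤ n := by
    have := hp.length_eq
    simp at this; omega
  refine ⟨u.length, n - u.length, by omega, u, ?_, w, ?_, rfl⟩
  · refine Finset.mem_filter.2 ⟨mem_sepWords.2 ⟨hup, hu0,
      h1.sublist (List.sublist_append_left _ _), h2.sublist (List.sublist_append_left _ _)⟩, ?_⟩
    rintro ⟨u₁, u₂, hu1, hu2, rfl, hu12⟩
    refine hmin u₁.length ?_ ⟨u₁, u₂ ++ w.map ((u₁ ++ u₂).length + ·), rfl, hu1, by simp [hu2],
      by rw [List.append_assoc], ?_⟩
    · have := List.length_pos_iff.2 hu2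
      rw [List.length_append]; omega
    · intro x hx y hy
      rcases List.mem_append.1 hy with h | h
      · exact hu12 x hx y h
      · exact huv x (by simp [hx]) y h
  · have e : ∀ r : ℕ → ℕ → Prop, (∀ x y, r x y → r (u.length + x) (u.length + y)) →
        Avoids r (w.map (u.length + ·)) → Avoids r w := by
      intro r hr h
      have := h.map (r' := r) (· - u.length) (fun x hx y hy hxy => by
        obtain ⟨x, -, rfl⟩ := List.mem_map.1 hx
        obtain ⟨y, -, rfl⟩ := List.mem_map.1 hy
        simp only [Nat.add_sub_cancel_left] at hxy
        exact hr _ _ hxy)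
      simpa [List.map_map, Function.comp_def] using this
    refine mem_sepWords.2 ⟨hw, by simpa using hv0, e _ (by simp) (h1.sublist ?_),
      e _ (by simp) (h2.sublist ?_)⟩ <;> exact List.sublist_append_right _ _

theorem sum_sumWords (n : ℕ) (F : List ℕ → ℝ) :
    ∑ l ∈ sumWords n, F l = ∑ p ∈ Finset.HasAntidiagonal.antidiagonal n, ∑ u ∈ indecWords p.1,
      ∑ v ∈ sepWords p.2, F (dsum p.1 u v) := by
  simp_rw [← Finset.sum_product', Finset.sum_sigma']
  symm
  refine Finset.sum_bij (fun x _ => dsum x.1.1 x.2.1 x.2.2) ?_ ?_ ?_ (fun _ _ => rfl)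
  · rintro ⟨⟨j, k⟩, u, v⟩ hx
    simp only [Finset.mem_sigma, Finset.mem_product, Finset.HasAntidiagonal.mem_antidiagonal] at hx
    obtain ⟨rfl, hu, hv⟩ := hx
    exact dsum_mem_sumWords (Finset.mem_filter.1 hu).1 hv
  · rintro ⟨⟨j, k⟩, u, v⟩ hx ⟨⟨j', k'⟩, u', v'⟩ hx' h
    simp only [Finset.mem_sigma, Finset.mem_product, Finset.HasAntidiagonal.mem_antidiagonal]
      at hx hx' h
    obtain ⟨rfl, hu, hv⟩ := hx
    obtain ⟨hjk, hu', hv'⟩ := hx'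
    have hus := (Finset.mem_filter.1 hu).1
    have hus' := (Finset.mem_filter.1 hu').1
    obtain rfl : j = j' := le_antisymm (length_le_of_dsum_eq hus' hu h.symm)
      (length_le_of_dsum_eq hus hu' h)
    obtain rfl : k' = k := by omega
    obtain ⟨rfl, h2⟩ := List.append_inj h
      (by rw [length_of_mem_sepWords hus, length_of_mem_sepWords hus'])
    obtain rfl := List.map_injective_iff.2 (add_right_injective j) h2
    rfl
  · intro l hl
    obtain ⟨j, k, rfl, u, hu, v, hv, rfl⟩ := exists_dsum_eq hl
    exact ⟨⟨(j, k), u, v⟩, by simp [hu, hv], rfl⟩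

/-! ### Complement -/

/-- The complement of a word with entries below `n`. -/
def wordCompl (n : ℕ) (l : List ℕ) : List ℕ := l.map (n - 1 - ·)

theorem wordCompl_wordCompl {n : ℕ} {l : List ℕ} (hl : l ∈ sepWords n) :
    wordCompl n (wordCompl n l) = l := by
  rw [wordCompl, wordCompl, List.map_map]
  conv_rhs => rw [← List.map_id l]
  refine List.map_congr_left fun x hx => ?_
  have := lt_of_mem_sepWords hl hx
  simp only [Function.comp_apply, id]
  omega

theorem wordCompl_lt_iff {n : ℕ} {l : List ℕ} (hl : l ∈ sepWords n) :
    ∀ x ∈ l, ∀ y ∈ l, (n - 1 - x < n - 1 - y ↔ x > y) := by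
  intro x hx y hy
  have := lt_of_mem_sepWords hl hx
  have := lt_of_mem_sepWords hl hy
  omega

theorem wordCompl_mem {n : ℕ} {l : List ℕ} (hl : l ∈ sepWords n) : wordCompl n l ∈ sepWords n := by
  obtain ⟨hp, h0, h1, h2⟩ := mem_sepWords.1 hl
  have hc := wordCompl_lt_iff hl
  have hnd : (wordCompl n l).Nodup := by
    refine List.Nodup.of_map (n - 1 - ·) ?_
    change (wordCompl n (wordCompl n l)).Nodup
    rw [wordCompl_wordCompl hl]
    exact hp.nodup_iff.2 List.nodup_range
  refine mem_sepWords.2 ⟨?_, by simpa [wordCompl], ?_, ?_⟩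
  · refine (List.subperm_of_subset hnd fun x hx => ?_).perm_of_length_le ?_
    · obtain ⟨y, hy, rfl⟩ := List.mem_map.1 hx
      have := lt_of_mem_sepWords hl hy
      exact List.mem_range.2 (by omega)
    · simp [wordCompl, length_of_mem_sepWords hl]
  · exact h2.map _ fun x hx y hy => (hc x hx y hy).1
  · exact h1.map _ fun x hx y hy => (hc y hy x hx).1

theorem sum_sepWords_wordCompl (n : ℕ) (F : List ℕ → ℝ) :
    ∑ l ∈ sepWords n, F (wordCompl n l) = ∑ l ∈ sepWords n, F l :=
  Finset.sum_nbij' (wordCompl n) (wordCompl n) (fun _ => wordCompl_mem) (fun _ => wordCompl_mem)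
    (fun _ => wordCompl_wordCompl) (fun _ => wordCompl_wordCompl) fun _ _ => rfl

theorem sum_sumWords_wordCompl (n : ℕ) (F : List ℕ → ℝ) :
    ∑ l ∈ sumWords n, F (wordCompl n l) = ∑ l ∈ skewWords n, F l := by
  refine Finset.sum_nbij' (wordCompl n) (wordCompl n) ?_ ?_ ?_ ?_ fun _ _ => rfl
  · intro l hl
    obtain ⟨hl, hs⟩ := Finset.mem_filter.1 hl
    exact Finset.mem_filter.2 ⟨wordCompl_mem hl,
      hs.map _ fun x hx y hy => (wordCompl_lt_iff hl y hy x hx).2⟩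
  · intro l hl
    obtain ⟨hl, hs⟩ := Finset.mem_filter.1 hl
    exact Finset.mem_filter.2 ⟨wordCompl_mem hl,
      hs.map _ fun x hx y hy => (wordCompl_lt_iff hl x hx y hy).2⟩
  · exact fun l hl => wordCompl_wordCompl (Finset.mem_filter.1 hl).1
  · exact fun l hl => wordCompl_wordCompl (Finset.mem_filter.1 hl).1

/-! ### Statistics on words -/

/-- Indicator that the first step of a word is an `r`-step. -/
noncomputable def startStep (r : ℕ → ℕ → Prop) : List ℕ → ℕ
  | a :: b :: _ => if r a b then 1 else 0
  | _ => 0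

/-- Indicator that the last step of a word is an `r`-step. -/
noncomputable def endStep (r : ℕ → ℕ → Prop) : List ℕ → ℕ
  | [a, b] => if r a b then 1 else 0
  | _ :: b :: c :: t => endStep r (b :: c :: t)
  | _ => 0

/-- Indicator that a word has a single letter. -/
def isSingle : List ℕ → ℕ
  | [_] => 1
  | _ => 0

theorem peaks_map {r r' : ℕ → ℕ → Prop} (f : ℕ → ℕ) : ∀ l : List ℕ,
    (∀ x ∈ l, ∀ y ∈ l, (r (f x) (f y) ↔ r' x y)) → peaks r (l.map f) = peaks r' l
  | [], _ | [_], _ | [_, _], _ => rfl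
  | a :: b :: c :: t, h => by
    have ih := peaks_map f (b :: c :: t) fun x hx y hy =>
      h x (List.mem_cons_of_mem a hx) y (List.mem_cons_of_mem a hy)
    simp only [List.map_cons] at ih ⊢
    rw [peaks, peaks, ih, h a (by simp) b (by simp), h c (by simp) b (by simp)]

theorem startStep_map {r r' : ℕ → ℕ → Prop} (f : ℕ → ℕ) : ∀ l : List ℕ,
    (∀ x ∈ l, ∀ y ∈ l, (r (f x) (f y) ↔ r' x y)) → startStep r (l.map f) = startStep r' l
  | [], _ | [_], _ => rfl
  | a :: b :: t, h => by
    simp only [List.map_cons]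
    rw [startStep, startStep, h a (by simp) b (by simp)]

theorem endStep_map {r r' : ℕ → ℕ → Prop} (f : ℕ → ℕ) : ∀ l : List ℕ,
    (∀ x ∈ l, ∀ y ∈ l, (r (f x) (f y) ↔ r' x y)) → endStep r (l.map f) = endStep r' l
  | [], _ | [_], _ => rfl
  | [a, b], h => by
    simp only [List.map_cons, List.map_nil]
    rw [endStep, endStep, h a (by simp) b (by simp)]
  | a :: b :: c :: t, h => by
    have ih := endStep_map f (b :: c :: t) fun x hx y hy =>
      h x (List.mem_cons_of_mem a hx) y (List.mem_cons_of_mem a hy)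
    simp only [List.map_cons] at ih ⊢
    rw [endStep, endStep, ih]

theorem isSingle_map (f : ℕ → ℕ) : ∀ l : List ℕ, isSingle (l.map f) = isSingle l
  | [] | [_] | _ :: _ :: _ => rfl

theorem peaks_lt_append : ∀ u v : List ℕ, u ≠ [] → v ≠ [] → (∀ x ∈ u, ∀ y ∈ v, x < y) →
    peaks (· < ·) (u ++ v) = peaks (· < ·) u + peaks (· < ·) v + startStep (· > ·) v
  | [], _, hu, _, _ => absurd rfl hu
  | _, [], _, hv, _ => absurd rfl hv
  | [a], [b], _, _, _ => rfl
  | [a], b :: c :: t, _, _, h => by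
    have hab := h a (by simp) b (by simp)
    simp only [List.cons_append, List.nil_append]
    rw [peaks, startStep]
    simp [hab, peaks, add_comm]
  | [a, b], c :: t, _, _, h => by
    have hbc := h b (by simp) c (by simp)
    have ih := peaks_lt_append [b] (c :: t) (by simp) (by simp) fun x hx => h x (by simp_all)
    simp only [List.cons_append, List.nil_append] at ih ⊢
    rw [peaks, ih]
    simp [hbc.le, peaks]
  | a :: b :: c :: u, v, _, hv, h => by
    have ih := peaks_lt_append (b :: c :: u) v (by simp) hv fun x hx =>
      h x (List.mem_cons_of_mem a hx)
    simp only [List.cons_append] at ih ⊢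
    rw [peaks, peaks, ih]
    ring

theorem peaks_gt_append : ∀ u v : List ℕ, u ≠ [] → v ≠ [] → (∀ x ∈ u, ∀ y ∈ v, x < y) →
    peaks (· > ·) (u ++ v) = peaks (· > ·) u + peaks (· > ·) v + endStep (· > ·) u
  | [], _, hu, _, _ => absurd rfl hu
  | _, [], _, hv, _ => absurd rfl hv
  | [a], [b], _, _, _ => rfl
  | [a], b :: c :: t, _, _, h => by
    have hab := h a (by simp) b (by simp)
    simp only [List.cons_append, List.nil_append]
    rw [peaks]
    simp [hab.le, peaks, endStep]
  | [a, b], c :: t, _, _, h => by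
    have hbc := h b (by simp) c (by simp)
    have ih := peaks_gt_append [b] (c :: t) (by simp) (by simp) fun x hx => h x (by simp_all)
    simp only [List.cons_append, List.nil_append] at ih ⊢
    rw [peaks, ih]
    simp [hbc, peaks, endStep, add_comm]
  | a :: b :: c :: u, v, _, hv, h => by
    have ih := peaks_gt_append (b :: c :: u) v (by simp) hv fun x hx =>
      h x (List.mem_cons_of_mem a hx)
    simp only [List.cons_append] at ih ⊢
    rw [peaks, peaks, endStep, ih]
    ring

theorem endStep_lt_append : ∀ u v : List ℕ, u ≠ [] → v ≠ [] → (∀ x ∈ u, ∀ y ∈ v, x < y) →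
    endStep (· < ·) (u ++ v) = isSingle v + endStep (· < ·) v
  | [], _, hu, _, _ => absurd rfl hu
  | _, [], _, hv, _ => absurd rfl hv
  | [a], [b], _, _, h => by
    have hab := h a (by simp) b (by simp)
    simp [endStep, isSingle, hab]
  | [a], b :: c :: t, _, _, h => by
    simp [endStep, isSingle]
  | a :: b :: u, c :: v, _, _, h => by
    have ih := endStep_lt_append (b :: u) (c :: v) (by simp) (by simp) fun x hx =>
      h x (List.mem_cons_of_mem a hx)
    rw [← ih]
    cases u <;> simp [endStep]

theorem startStep_add {l : List ℕ} (hnd : l.Nodup) (h0 : l ≠ []) :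
    startStep (· < ·) l + startStep (· > ·) l + isSingle l = 1 := by
  match l with
  | [] => exact absurd rfl h0
  | [a] => rfl
  | a :: b :: t =>
    have : a ≠ b := by
      rintro rfl
      simp at hnd
    rcases lt_or_gt_of_ne this with h | h <;> simp [startStep, isSingle, h, h.le]

theorem endStep_add : ∀ l : List ℕ, l.Nodup → l ≠ [] →
    endStep (· < ·) l + endStep (· > ·) l + isSingle l = 1
  | [], _, h0 => absurd rfl h0
  | [a], _, _ => rfl
  | [a, b], hnd, _ => by
    have : a ≠ b := by
      rintro rfl
      simp at hnd
    rcases lt_or_gt_of_ne this with h | h <;> simp [endStep, isSingle, h, h.le]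
  | a :: b :: c :: t, hnd, _ => by
    have := endStep_add (b :: c :: t) (List.nodup_cons.1 hnd).2 (by simp)
    simpa [endStep, isSingle] using this

/-! ### Generating functions -/

/-- The generating function of a statistic over a family of sets of words. -/
noncomputable def gf (A : ℕ → Finset (List ℕ)) (F : List ℕ → ℕ) : PowerSeries ℝ :=
  PowerSeries.mk fun n => ∑ l ∈ A n, (F l : ℝ)

theorem gf_congr {A : ℕ → Finset (List ℕ)} {F G : List ℕ → ℕ}
    (h : ∀ n, ∀ l ∈ A n, F l = G l) : gf A F = gf A G := by
  ext n
  simp only [gf, PowerSeries.coeff_mk]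
  exact Finset.sum_congr rfl fun l hl => by rw [h n l hl]

theorem gf_add (A : ℕ → Finset (List ℕ)) (F G : List ℕ → ℕ) :
    gf A (fun l => F l + G l) = gf A F + gf A G := by
  ext n
  simp [gf, Finset.sum_add_distrib]

theorem gf_sepWords (F : List ℕ → ℕ) :
    gf sepWords F = gf sumWords F + gf indecWords F := by
  ext n
  simp [gf, sumWords, indecWords, Finset.sum_filter_add_sum_filter_not]

theorem mem_sepWords_one : [0] ∈ sepWords 1 := by
  refine mem_sepWords.2 ⟨by simp, by simp, ?_, ?_⟩ <;>
  · intro a b c d h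
    have := h.length_le
    simp at this

theorem eq_of_mem_sepWords {n : ℕ} {l : List ℕ} (hl : l ∈ sepWords n) (h : n < 2) :
    n = 1 ∧ l = [0] := by
  obtain ⟨hp, h0, -⟩ := mem_sepWords.1 hl
  interval_cases n
  · exact absurd (by simpa using hp) h0
  · exact ⟨rfl, by simpa using hp⟩

theorem not_splits_singleton (r : ℕ → ℕ → Prop) (a : ℕ) : ¬ Splits r [a] := by
  rintro ⟨u, v, hu, hv, h, -⟩
  have := congrArg List.length h
  have h1 := List.length_pos_iff.2 hu
  have h2 := List.length_pos_iff.2 hv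
  rw [List.length_append, List.length_singleton] at this
  omega

theorem sum_indecWords (n : ℕ) (F : List ℕ → ℝ) :
    ∑ l ∈ indecWords n, F l = (if n = 1 then F [0] else 0) + ∑ l ∈ skewWords n, F l := by
  rcases eq_or_ne n 1 with rfl | hn
  · have h1 : indecWords 1 = {[0]} := by
      ext l
      simp only [indecWords, Finset.mem_filter, Finset.mem_singleton]
      constructor
      · exact fun h => (eq_of_mem_sepWords h.1 (by omega)).2
      · rintro rfl
        exact ⟨mem_sepWords_one, not_splits_singleton _ _⟩
    have h2 : skewWords 1 = ∅ := by
      refine Finset.filter_eq_empty_iff.2 fun l hl => ?_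
      rw [(eq_of_mem_sepWords hl (by omega)).2]
      exact not_splits_singleton _ _
    simp [h1, h2]
  · rw [if_neg hn, zero_add]
    refine Finset.sum_congr (Finset.filter_congr fun l hl => ?_) fun _ _ => rfl
    refine ⟨fun h => ?_, Splits.not_swap⟩
    obtain ⟨hp, -, h1, h2⟩ := mem_sepWords.1 hl
    have hlen : 2 ≤ l.length := by
      rw [length_of_mem_sepWords hl]
      by_contra! h2
      exact hn (eq_of_mem_sepWords hl h2).1
    exact (splits_or_splits (hp.nodup_iff.2 List.nodup_range) hlen h1 h2).resolve_left h

theorem gf_indecWords (F : List ℕ → ℕ) :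
    gf indecWords F = (F [0] : PowerSeries ℝ) * PowerSeries.X + gf skewWords F := by
  ext n
  rw [gf, PowerSeries.coeff_mk, sum_indecWords, map_add, gf, PowerSeries.coeff_mk,
    ← map_natCast (PowerSeries.C (R := ℝ)), PowerSeries.coeff_C_mul, PowerSeries.coeff_X]
  simp

theorem gf_isSingle : gf sepWords isSingle = PowerSeries.X := by
  ext n
  rw [gf, PowerSeries.coeff_mk, PowerSeries.coeff_X]
  split_ifs with hn
  · subst hn
    rw [Finset.sum_eq_single_of_mem [0] mem_sepWords_one fun l hl h =>
      absurd (eq_of_mem_sepWords hl (by omega)).2 h]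
    simp [isSingle]
  · refine Finset.sum_eq_zero fun l hl => ?_
    have := length_of_mem_sepWords hl
    match l with
    | [] | _ :: _ :: _ => simp [isSingle]
    | [a] => exact absurd this.symm hn

theorem gf_sumWords {ι : Type*} [Fintype ι] (F : List ℕ → ℕ) (G H : ι → List ℕ → ℕ)
    (hH : ∀ i n v, H i (v.map (n + ·)) = H i v)
    (h : ∀ u v : List ℕ, u ≠ [] → v ≠ [] → (∀ x ∈ u, ∀ y ∈ v, x < y) →
      F (u ++ v) = ∑ i, G i u * H i v) :
    gf sumWords F = ∑ i, gf indecWords (G i) * gf sepWords (H i) := by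
  ext n
  simp only [gf, PowerSeries.coeff_mk, map_sum, PowerSeries.coeff_mul]
  rw [sum_sumWords]
  conv_rhs => rw [Finset.sum_comm]
  refine Finset.sum_congr rfl fun p _ => ?_
  simp_rw [Finset.sum_mul_sum]
  conv_rhs => rw [Finset.sum_comm]
  refine Finset.sum_congr rfl fun u hu => ?_
  conv_rhs => rw [Finset.sum_comm]
  refine Finset.sum_congr rfl fun v hv => ?_
  have hu' := (Finset.mem_filter.1 hu).1
  rw [dsum, h u _ (mem_sepWords.1 hu').2.1 (by simpa using (mem_sepWords.1 hv).2.1)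
    (lt_of_mem_dsum hu' v)]
  simp [hH]

theorem gf_skewWords {F G : List ℕ → ℕ}
    (h : ∀ n, ∀ l ∈ sepWords n, F (wordCompl n l) = G l) :
    gf skewWords F = gf sumWords G := by
  ext n
  simp only [gf, PowerSeries.coeff_mk]
  rw [← sum_sumWords_wordCompl]
  exact Finset.sum_congr rfl fun l hl => by rw [h n l (Finset.mem_filter.1 hl).1]

theorem gf_sepWords_wordCompl {F G : List ℕ → ℕ}
    (h : ∀ n, ∀ l ∈ sepWords n, F (wordCompl n l) = G l) :
    gf sepWords F = gf sepWords G := by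
  ext n
  simp only [gf, PowerSeries.coeff_mk]
  rw [← sum_sepWords_wordCompl]
  exact Finset.sum_congr rfl fun l hl => by rw [h n l hl]

theorem wordCompl_gt_iff {n : ℕ} {l : List ℕ} (hl : l ∈ sepWords n) :
    ∀ x ∈ l, ∀ y ∈ l, (n - 1 - x > n - 1 - y ↔ x < y) :=
  fun x hx y hy => wordCompl_lt_iff hl y hy x hx

theorem two_mul_gf_startStep :
    2 * gf sepWords (startStep (· > ·)) = gf sepWords 1 - PowerSeries.X := by
  have h1 : gf sepWords (startStep (· < ·)) = gf sepWords (startStep (· > ·)) :=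
    gf_sepWords_wordCompl fun n l hl => startStep_map _ l (wordCompl_lt_iff hl)
  have h2 : gf sepWords (fun l => startStep (· < ·) l + startStep (· > ·) l + isSingle l) =
      gf sepWords 1 := gf_congr fun n l hl => startStep_add
    ((mem_sepWords.1 hl).1.nodup_iff.2 List.nodup_range) (mem_sepWords.1 hl).2.1
  rw [gf_add, gf_add, h1, gf_isSingle] at h2
  linear_combination h2

theorem two_mul_gf_endStep :
    2 * gf sepWords (endStep (· < ·)) = gf sepWords 1 - PowerSeries.X := by
  have h1 : gf sepWords (endStep (· < ·)) = gf sepWords (endStep (· > ·)) :=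
    gf_sepWords_wordCompl fun n l hl => endStep_map _ l (wordCompl_lt_iff hl)
  have h2 : gf sepWords (fun l => endStep (· < ·) l + endStep (· > ·) l + isSingle l) =
      gf sepWords 1 := gf_congr fun n l hl => endStep_add l
    ((mem_sepWords.1 hl).1.nodup_iff.2 List.nodup_range) (mem_sepWords.1 hl).2.1
  rw [gf_add, gf_add, ← h1, gf_isSingle] at h2
  linear_combination h2

theorem gf_sumWords_one :
    gf sumWords 1 = gf indecWords 1 * gf sepWords 1 := by
  simpa using gf_sumWords (ι := Unit) 1 (fun _ => 1) (fun _ => 1) (by simp) (by simp)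

theorem gf_indecWords_one :
    gf indecWords 1 = PowerSeries.X + gf indecWords 1 * gf sepWords 1 := by
  rw [← gf_sumWords_one, ← gf_skewWords (F := 1) (G := 1) (by simp)]
  simpa using gf_indecWords 1

theorem gf_sepWords_one :
    gf sepWords 1 = gf indecWords 1 * gf sepWords 1 + gf indecWords 1 := by
  rw [← gf_sumWords_one, ← gf_sepWords]

theorem gf_indecWords_endStep :
    gf indecWords (endStep (· > ·)) =
      gf indecWords 1 * (PowerSeries.X + gf sepWords (endStep (· < ·))) := by
  have h1 : gf skewWords (endStep (· > ·)) = gf sumWords (endStep (· < ·)) :=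
    gf_skewWords fun n l hl => endStep_map _ l (wordCompl_gt_iff hl)
  have h2 := gf_sumWords (ι := Unit) (endStep (· < ·)) (fun _ => 1)
    (fun _ l => isSingle l + endStep (· < ·) l)
    (fun _ n v => by rw [isSingle_map, endStep_map (r' := (· < ·)) _ v (by simp)])
    (fun u v hu hv h => by simp [endStep_lt_append u v hu hv h])
  rw [gf_indecWords, h1, h2]
  simp [gf_add, gf_isSingle, endStep]

theorem gf_sumWords_peaks_lt :
    gf sumWords (peaks (· < ·)) = gf indecWords (peaks (· < ·)) * gf sepWords 1 +
      gf indecWords 1 * gf sepWords (peaks (· < ·)) +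
      gf indecWords 1 * gf sepWords (startStep (· > ·)) := by
  have := gf_sumWords (peaks (· < ·)) ![peaks (· < ·), 1, 1]
    ![1, peaks (· < ·), startStep (· > ·)]
    (fun i n v => by
      fin_cases i
      · rfl
      · exact peaks_map _ v (by simp)
      · exact startStep_map _ v (by simp))
    (fun u v hu hv h => by simp [Fin.sum_univ_three, peaks_lt_append u v hu hv h])
  simpa [Fin.sum_univ_three] using this

theorem gf_sumWords_peaks_gt :
    gf sumWords (peaks (· > ·)) = gf indecWords (peaks (· > ·)) * gf sepWords 1 +
      gf indecWords 1 * gf sepWords (peaks (· > ·)) +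
      gf indecWords (endStep (· > ·)) * gf sepWords 1 := by
  have := gf_sumWords (peaks (· > ·)) ![peaks (· > ·), 1, endStep (· > ·)]
    ![1, peaks (· > ·), 1]
    (fun i n v => by
      fin_cases i
      · rfl
      · exact peaks_map _ v (by simp)
      · rfl)
    (fun u v hu hv h => by simp [Fin.sum_univ_three, peaks_gt_append u v hu hv h])
  simpa [Fin.sum_univ_three] using this

theorem gf_sepWords_peaks_gt :
    gf sepWords (peaks (· > ·)) = gf sepWords (peaks (· < ·)) :=
  gf_sepWords_wordCompl fun _ l hl => peaks_map _ l (wordCompl_gt_iff hl)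

theorem schroeder_equation : gf sepWords 1 ^ 2 =
    gf sepWords 1 - PowerSeries.X - PowerSeries.X * gf sepWords 1 := by
  have h1 := gf_indecWords_one
  have h2 := gf_sepWords_one
  have h3 : gf sepWords 1 + PowerSeries.X = 2 * gf indecWords 1 := by
    linear_combination h2 - h1
  linear_combination (-1 + gf sepWords 1) * h3 - 2 * h1

theorem peaks_equation :
    2 * (gf sepWords (peaks (· < ·)) * (1 - PowerSeries.X - 2 * gf sepWords 1)) =
      gf sepWords 1 ^ 2 - PowerSeries.X ^ 2 := by
  have h1 := gf_indecWords_one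
  have h2 := gf_sepWords_one
  have h3 : gf sepWords 1 + PowerSeries.X = 2 * gf indecWords 1 := by
    linear_combination h2 - h1
  have hs := two_mul_gf_startStep
  have he := two_mul_gf_endStep
  have hE := gf_indecWords_endStep
  have hA := gf_sumWords_peaks_lt
  have hB := gf_sumWords_peaks_gt
  have hIlt : gf indecWords (peaks (· < ·)) = gf sumWords (peaks (· > ·)) := by
    rw [gf_indecWords, gf_skewWords fun n l hl => peaks_map _ l (wordCompl_lt_iff hl)]
    simp [peaks]
  have hIgt : gf indecWords (peaks (· > ·)) = gf sumWords (peaks (· < ·)) := by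
    rw [gf_indecWords, gf_skewWords fun n l hl => peaks_map _ l (wordCompl_gt_iff hl)]
    simp [peaks]
  have hP := gf_sepWords (peaks (· < ·))
  rw [gf_sepWords_peaks_gt, hIgt, hE] at hB
  rw [hIlt] at hA hP
  generalize gf sepWords (peaks (· < ·)) = P at *
  generalize gf sumWords (peaks (· < ·)) = A at *
  generalize gf sumWords (peaks (· > ·)) = B at *
  generalize gf sepWords (startStep (· > ·)) = D at *
  generalize gf sepWords (endStep (· < ·)) = E at *
  generalize gf sepWords 1 = S at *
  generalize gf indecWords 1 = I at *
  linear_combination 2 * hA + 2 * hB + (2 - 2 * S) * hP + I * hs + I * S * he - 2 * P * h3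
    - (S + PowerSeries.X) * h1 - S * h3

/-! ### From permutations to words -/

theorem containsPattern_iff {n : ℕ} (σ : Equiv.Perm (Fin n)) (τ : Fin 4 → Fin 4) :
    ContainsPattern σ τ ↔ ∃ w : Fin 4 → ℕ, List.Sublist [w 0, w 1, w 2, w 3] (word σ) ∧
      ∀ a b, τ a < τ b ↔ w a < w b := by
  constructor
  · rintro ⟨f, hf, h⟩
    refine ⟨fun i => σ (f i), (sublist_word_iff σ _).2 ⟨[f 0, f 1, f 2, f 3], ?_, rfl⟩, h⟩
    simp [hf.lt_iff_lt]
  · rintro ⟨w, hs, h⟩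
    obtain ⟨l, hl, he⟩ := (sublist_word_iff σ _).1 hs
    match l with
    | [] | [_] | [_, _] | [_, _, _] | _ :: _ :: _ :: _ :: _ :: _ => simp at he
    | [x, y, z, t] =>
      simp only [List.map_cons, List.map_nil, List.cons.injEq, and_true] at he
      refine ⟨![x, y, z, t], ?_, ?_⟩
      · simpa [Fin.strictMono_iff_lt_succ, Fin.forall_fin_succ] using hl
      · have hw : ∀ i, w i = σ (![x, y, z, t] i) := by
          intro i
          fin_cases i
          exacts [he.1, he.2.1, he.2.2.1, he.2.2.2]
        intro a b
        rw [h, hw, hw, Fin.lt_def]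

theorem avoids_gt_iff {n : ℕ} (σ : Equiv.Perm (Fin n)) :
    Avoids (· > ·) (word σ) ↔ ¬ ContainsPattern σ (![1, 3, 0, 2] : Fin 4 → Fin 4) := by
  rw [containsPattern_iff, not_exists]
  constructor
  · rintro h w ⟨hs, hw⟩
    exact h _ _ _ _ hs ⟨(hw 3 1).1 (by decide), (hw 0 3).1 (by decide), (hw 2 0).1 (by decide)⟩
  · rintro h a b c d hs ⟨h1, h2, h3⟩
    refine h ![a, b, c, d] ⟨hs, ?_⟩
    simp only [Fin.forall_fin_succ]
    simp
    omega

theorem avoids_lt_iff {n : ℕ} (σ : Equiv.Perm (Fin n)) :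
    Avoids (· < ·) (word σ) ↔ ¬ ContainsPattern σ (![2, 0, 3, 1] : Fin 4 → Fin 4) := by
  rw [containsPattern_iff, not_exists]
  constructor
  · rintro h w ⟨hs, hw⟩
    exact h _ _ _ _ hs ⟨(hw 1 3).1 (by decide), (hw 3 0).1 (by decide), (hw 0 2).1 (by decide)⟩
  · rintro h a b c d hs ⟨h1, h2, h3⟩
    refine h ![a, b, c, d] ⟨hs, ?_⟩
    simp only [Fin.forall_fin_succ]
    simp
    omega

theorem word_perm {n : ℕ} (σ : Equiv.Perm (Fin n)) : List.Perm (word σ) (List.range n) := by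
  refine (List.subperm_of_subset (word_nodup σ) fun x hx => ?_).perm_of_length_le ?_
  · obtain ⟨i, -, rfl⟩ := List.mem_map.1 hx
    exact List.mem_range.2 (σ i).2
  · simp [length_word]

theorem word_injective {n : ℕ} : Function.Injective (word (n := n)) := by
  intro σ τ h
  ext i
  exact List.map_inj_left.1 h i (List.mem_finRange i)

theorem exists_word_eq {n : ℕ} {l : List ℕ} (h : List.Perm l (List.range n)) :
    ∃ σ : Equiv.Perm (Fin n), word σ = l := by
  have hlen : l.length = n := by simpa using h.length_eq
  have hnd : l.Nodup := h.nodup_iff.2 List.nodup_range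
  subst hlen
  let f : Fin l.length → Fin l.length := fun i =>
    ⟨l.get i, List.mem_range.1 (h.subset (List.get_mem l i))⟩
  have hf : Function.Injective f := fun i j hij =>
    List.nodup_iff_injective_get.1 hnd (Fin.mk.inj hij)
  refine ⟨Equiv.ofBijective f (Finite.injective_iff_bijective.1 hf), ?_⟩
  rw [word, ← List.ofFn_eq_map]
  exact List.ofFn_get l

theorem sum_SEP {n : ℕ} (hn : n ≠ 0) (F : List ℕ → ℝ) :
    ∑ σ ∈ SEP n, F (word σ) = ∑ l ∈ sepWords n, F l := by
  have hmem : ∀ σ : Equiv.Perm (Fin n), σ ∈ SEP n ↔ word σ ∈ sepWords n := by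
    intro σ
    rw [SEP, Finset.mem_filter, Separable, mem_sepWords, avoids_gt_iff, avoids_lt_iff]
    have : word σ ≠ [] := fun h => hn (by rw [← length_word σ, h]; rfl)
    simp [word_perm, this, and_comm]
  refine Finset.sum_bij (fun σ _ => word σ) (fun σ => (hmem σ).1)
    (fun _ _ _ _ h => word_injective h) (fun l hl => ?_) fun _ _ => rfl
  obtain ⟨σ, rfl⟩ := exists_word_eq (mem_sepWords.1 hl).1
  exact ⟨σ, (hmem σ).2 hl, rfl⟩

theorem sepExp_altTypeLen {n : ℕ} (hn : n ≠ 0) (hS : (SEP n).card ≠ 0) (s : Bool) :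
    sepExp n (fun σ => (altTypeLen σ s (!s) : ℝ)) =
      1 + 2 * (PowerSeries.coeff n (gf sepWords (peaks (· < ·))) /
        PowerSeries.coeff n (gf sepWords 1)) := by
  have hP : PowerSeries.coeff n (gf sepWords (peaks (· < ·))) =
      ∑ σ ∈ SEP n, (peaks (signedLT s) (word σ) : ℝ) := by
    have : gf sepWords (peaks (· < ·)) = gf sepWords (peaks (signedLT s)) := by
      cases s
      · exact gf_sepWords_peaks_gt.symm
      · rfl
    rw [this, gf, PowerSeries.coeff_mk, ← sum_SEP hn]
  have h1 : PowerSeries.coeff n (gf sepWords 1) = (SEP n).card := by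
    rw [gf, PowerSeries.coeff_mk, ← sum_SEP hn]
    simp
  have hS' : ((SEP n).card : ℝ) ≠ 0 := Nat.cast_ne_zero.2 hS
  rw [sepExp, hP, h1]
  simp only [altTypeLen_not_eq hn]
  push_cast
  rw [Finset.sum_add_distrib, ← Finset.mul_sum]
  field_simp
  simp

theorem card_SEP_ne_zero (n : ℕ) : (SEP n).card ≠ 0 := by
  refine Finset.card_ne_zero_of_mem (a := 1) ?_
  rw [SEP, Finset.mem_filter, Separable]
  refine ⟨Finset.mem_univ _, ?_, ?_⟩ <;>
  · rintro ⟨f, hf, h⟩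
    have h01 := (h 0 1).2 (hf (by decide))
    have h12 := (h 1 2).2 (hf (by decide))
    revert h01 h12
    decide

/-- Refined asymptotics of the mean of `Aₙ^{+,-}` and `Aₙ^{-,+}`:
`E[Aₙ^{±,∓}] = (2-√2)n - (1/4)(3-2√2) + o(1)`. -/
theorem mean_altTypeLen_pm_refined :
    Tendsto (fun n : ℕ =>
        sepExp n (fun σ => (altTypeLen σ true false : ℝ)) - (2 - Real.sqrt 2) * n) atTop
      (nhds (-(1 / 4) * (3 - 2 * Real.sqrt 2))) ∧
    Tendsto (fun n : ℕ =>
        sepExp n (fun σ => (altTypeLen σ false true : ℝ)) - (2 - Real.sqrt 2) * n) atTop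
      (nhds (-(1 / 4) * (3 - 2 * Real.sqrt 2))) := by
  have h : ∀ s : Bool, Tendsto (fun n : ℕ =>
      sepExp n (fun σ => (altTypeLen σ s (!s) : ℝ)) - (2 - Real.sqrt 2) * n) atTop
      (nhds (-(1 / 4) * (3 - 2 * Real.sqrt 2))) := by
    intro s
    refine (tendsto_mean_of_coeff _ _ ?_ schroeder_equation peaks_equation).congr' ?_
    · rw [← PowerSeries.coeff_zero_eq_constantCoeff_apply, gf, PowerSeries.coeff_mk]
      refine Finset.sum_eq_zero fun l hl => ?_
      exact absurd (List.length_eq_zero_iff.1 (length_of_mem_sepWords hl))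
        (mem_sepWords.1 hl).2.1
    · filter_upwards [eventually_ne_atTop 0] with n hn
      rw [sepExp_altTypeLen hn (card_SEP_ne_zero n)]
  exact ⟨h true, h false⟩
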